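/- Let E be a real Hilbert space, p, n ∈ ℕ, and for each ι ∈ Fin p let f^ι : E → ℝ be differentiable with gradient ∇f^ι. Let γ₀ ≥ 0 and γ : Fin p → ℝ be nonnegative with γ₀ + Σ_ι γ ι = 1, let W : Fin n → Fin n → ℝ be doubly stochastic, let α ≥ 0, v : Fin n → E, ε : Fin n → Fin p → E. Suppose x* ∈ E satisfies ∇f^ι(x*) = 0 for every ι. Define x j := γ₀ • v j + Σ_ι γ ι • (v j − α • (∇f^ι (v j) − ε j ι)) and v' l := Σ_j W l j • x j. Then Σ_l ‖v' l − x*‖² ≤ Σ_j ‖v j − x*‖² + 2α Σ_j Σ_ι γ ι ⟨ε j ι, v j − x*⟩ + 2(1−γ₀) α² Σ_j Σ_ι γ ι ‖ε j ι‖² − 2α Σ_j Σ_ι γ ι (⟨∇f^ι(v j), v j − x*⟩ − (1−γ₀) α ‖∇f^ι(v j)‖²). -/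

import Mathlib

open RealInnerProductSpace

/-!
Averaging with a doubly stochastic matrix does not increase the total squared distance to a point,
by Jensen's inequality for each row and summation over the columns, so only the gradient step
matters. Since the weights add up to one, that step moves a server by `-α • ∑ ι, γ ι • (g ι - ε ι)`.
Expanding the square of the distance to `xstar` gives the inner product terms exactly, and the
quadratic term is bounded with the weighted Cauchy-Schwarz inequality, whose total weight
`∑ ι, γ ι = 1 - γ₀` is the factor in the bound, and with `‖g - ε‖ ^ 2 ≤ 2 * (‖g‖ ^ 2 + ‖ε‖ ^ 2)`.
-/

section DoublyStochastic

variable {𝕜 E β κ : Type*} [Field 𝕜] [LinearOrder 𝕜] [IsStrictOrderedRing 𝕜]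
  [AddCommGroup E] [Module 𝕜 E]
  [AddCommGroup β] [PartialOrder β] [IsOrderedAddMonoid β] [Module 𝕜 β] [IsStrictOrderedModule 𝕜 β]
  [Fintype κ] [DecidableEq κ]

theorem sum_map_sum_smul_le_of_mem_doublyStochastic {s : Set E} {φ : E → β}
    (hφ : ConvexOn 𝕜 s φ) {W : Matrix κ κ 𝕜} (hW : W ∈ doublyStochastic 𝕜 κ)
    {x : κ → E} (hx : ∀ j, x j ∈ s) :
    ∑ l, φ (∑ j, W l j • x j) ≤ ∑ j, φ (x j) :=
  calc
    ∑ l, φ (∑ j, W l j • x j) ≤ ∑ l, ∑ j, W l j • φ (x j) :=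
      Finset.sum_le_sum fun l _ ↦ hφ.map_sum_le (fun _ _ ↦ nonneg_of_mem_doublyStochastic hW)
        (sum_row_of_mem_doublyStochastic hW l) fun j _ ↦ hx j
    _ = ∑ j, (∑ l, W l j) • φ (x j) := by
      rw [Finset.sum_comm]
      simp only [Finset.sum_smul]
    _ = ∑ j, φ (x j) := by
      simp only [sum_col_of_mem_doublyStochastic hW, one_smul]

end DoublyStochastic

theorem convexOn_univ_norm_sub_sq {E : Type*} [SeminormedAddCommGroup E] [NormedSpace ℝ E]
    (c : E) : ConvexOn ℝ Set.univ fun y ↦ ‖y - c‖ ^ 2 := by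
  simp only [← dist_eq_norm]
  exact (convexOn_univ_dist c).pow (fun _ _ ↦ dist_nonneg) 2

theorem smul_add_sum_smul_sub {R M ι : Type*} [Ring R] [AddCommGroup M] [Module R M]
    {s : Finset ι} {w₀ : R} {w : ι → R} (hw : w₀ + ∑ i ∈ s, w i = 1) (v : M) (d : ι → M) :
    w₀ • v + ∑ i ∈ s, w i • (v - d i) = v - ∑ i ∈ s, w i • d i := by
  simp only [smul_sub, Finset.sum_sub_distrib, ← Finset.sum_smul]
  rw [← add_sub_assoc, ← add_smul, hw, one_smul]

section WeightedSum

variable {E ι : Type*} {s : Finset ι} {w : ι → ℝ}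

section NormedSpace

variable [SeminormedAddCommGroup E] [NormedSpace ℝ E]

theorem norm_sum_smul_sq_le (hw : ∀ i ∈ s, 0 ≤ w i) (z : ι → E) :
    ‖∑ i ∈ s, w i • z i‖ ^ 2 ≤ (∑ i ∈ s, w i) * ∑ i ∈ s, w i * ‖z i‖ ^ 2 := by
  have norm_le : ‖∑ i ∈ s, w i • z i‖ ≤ ∑ i ∈ s, w i * ‖z i‖ :=
    norm_sum_le_of_le s fun i hi ↦ (norm_smul_of_nonneg (hw i hi) (z i)).le
  calc
    ‖∑ i ∈ s, w i • z i‖ ^ 2 ≤ (∑ i ∈ s, w i * ‖z i‖) ^ 2 := by gcongr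
    _ ≤ (∑ i ∈ s, w i) * ∑ i ∈ s, w i * ‖z i‖ ^ 2 :=
      Finset.sum_sq_le_sum_mul_sum_of_sq_le_mul s hw
        (fun i hi ↦ mul_nonneg (hw i hi) (sq_nonneg _))
        fun i _ ↦ by rw [mul_pow, sq (w i), mul_assoc]

theorem norm_sum_smul_sub_sq_le (hw : ∀ i ∈ s, 0 ≤ w i) (g e : ι → E) :
    ‖∑ i ∈ s, w i • (g i - e i)‖ ^ 2 ≤
      (∑ i ∈ s, w i) * ∑ i ∈ s, w i * (2 * (‖g i‖ ^ 2 + ‖e i‖ ^ 2)) := by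
  have norm_sub_sq_le (i : ι) : ‖g i - e i‖ ^ 2 ≤ 2 * (‖g i‖ ^ 2 + ‖e i‖ ^ 2) :=
    (pow_le_pow_left₀ (norm_nonneg _) (norm_sub_le _ _) 2).trans add_sq_le
  refine (norm_sum_smul_sq_le hw _).trans ?_
  exact mul_le_mul_of_nonneg_left
    (Finset.sum_le_sum fun i hi ↦ mul_le_mul_of_nonneg_left (norm_sub_sq_le i) (hw i hi))
    (Finset.sum_nonneg hw)

end NormedSpace

theorem norm_sub_smul_sum_smul_sub_sq_le [SeminormedAddCommGroup E] [InnerProductSpace ℝ E]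
    (hw : ∀ i ∈ s, 0 ≤ w i) (α : ℝ) (u : E) (g e : ι → E) :
    ‖u - α • ∑ i ∈ s, w i • (g i - e i)‖ ^ 2 ≤
      ‖u‖ ^ 2 + 2 * α * (∑ i ∈ s, w i * ⟪e i, u⟫)
      + 2 * (∑ i ∈ s, w i) * α ^ 2 * (∑ i ∈ s, w i * ‖e i‖ ^ 2)
      - 2 * α * (∑ i ∈ s, w i * (⟪g i, u⟫ - (∑ i ∈ s, w i) * α * ‖g i‖ ^ 2)) := by
  have inner_eq : ⟪u, ∑ i ∈ s, w i • (g i - e i)⟫ =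
      ∑ i ∈ s, w i * ⟪g i, u⟫ - ∑ i ∈ s, w i * ⟪e i, u⟫ := by
    simp only [inner_sum, real_inner_smul_right, inner_sub_right, mul_sub,
      Finset.sum_sub_distrib, real_inner_comm u]
  calc
    ‖u - α • ∑ i ∈ s, w i • (g i - e i)‖ ^ 2
      = ‖u‖ ^ 2 - 2 * α * (∑ i ∈ s, w i * ⟪g i, u⟫ - ∑ i ∈ s, w i * ⟪e i, u⟫)
        + α ^ 2 * ‖∑ i ∈ s, w i • (g i - e i)‖ ^ 2 := by
      rw [norm_sub_sq_real, real_inner_smul_right, inner_eq, norm_smul, mul_pow,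
        Real.norm_eq_abs, sq_abs, mul_assoc 2 α]
    _ ≤ ‖u‖ ^ 2 - 2 * α * (∑ i ∈ s, w i * ⟪g i, u⟫ - ∑ i ∈ s, w i * ⟪e i, u⟫)
        + α ^ 2 * ((∑ i ∈ s, w i) * ∑ i ∈ s, w i * (2 * (‖g i‖ ^ 2 + ‖e i‖ ^ 2))) := by
      gcongr
      exact norm_sum_smul_sub_sq_le hw g e
    _ = _ := by
      simp only [mul_sub, mul_add, Finset.sum_sub_distrib, Finset.sum_add_distrib,
        mul_left_comm (w _), ← Finset.mul_sum]
      ring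

end WeightedSum

theorem srdo_type1_error_bound_general
    {E ι κ : Type*} [SeminormedAddCommGroup E] [InnerProductSpace ℝ E] [Fintype ι] [Fintype κ]
    [DecidableEq κ] {γ₀ : ℝ} {γ : ι → ℝ} (hγ : ∀ i, 0 ≤ γ i) (hγsum : γ₀ + ∑ i, γ i = 1)
    {W : Matrix κ κ ℝ} (hW : W ∈ doublyStochastic ℝ κ) (α : ℝ) (v : κ → E) (g ε : κ → ι → E)
    (c : E) {x v' : κ → E}
    (hx : ∀ j, x j = γ₀ • v j + ∑ i, γ i • (v j - α • (g j i - ε j i)))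
    (hv' : ∀ l, v' l = ∑ j, W l j • x j) :
    ∑ l, ‖v' l - c‖ ^ 2 ≤
      ∑ j, ‖v j - c‖ ^ 2
      + 2 * α * (∑ j, ∑ i, γ i * ⟪ε j i, v j - c⟫)
      + 2 * (1 - γ₀) * α ^ 2 * (∑ j, ∑ i, γ i * ‖ε j i‖ ^ 2)
      - 2 * α * (∑ j, ∑ i, γ i * (⟪g j i, v j - c⟫ - (1 - γ₀) * α * ‖g j i‖ ^ 2)) := by
  have consensus : ∑ l, ‖v' l - c‖ ^ 2 ≤ ∑ j, ‖x j - c‖ ^ 2 := by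
    simp only [hv']
    exact sum_map_sum_smul_le_of_mem_doublyStochastic (convexOn_univ_norm_sub_sq c) hW
      fun _ ↦ Set.mem_univ _
  have displacement (j : κ) : x j - c = (v j - c) - α • ∑ i, γ i • (g j i - ε j i) := by
    rw [hx, smul_add_sum_smul_sub hγsum, sub_right_comm, Finset.smul_sum]
    simp only [smul_comm α]
  refine consensus.trans ?_
  simp only [Finset.mul_sum, ← Finset.sum_add_distrib, ← Finset.sum_sub_distrib]
  refine Finset.sum_le_sum fun j _ ↦ ?_
  rw [displacement, ← eq_sub_of_add_eq' hγsum]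
  simpa only [Finset.mul_sum] using
    norm_sub_smul_sum_smul_sub_sq_le (fun i _ ↦ hγ i) α (v j - c) (g j) (ε j)

/-- SRDO per-iteration error bound when the global optimizer `x*` is a critical point of every
partition function (Lemma `type1_error_bound`, deterministic form). -/
theorem srdo_type1_error_bound
    {E : Type*} [NormedAddCommGroup E] [InnerProductSpace ℝ E] [CompleteSpace E]
    (p n : ℕ) (f : Fin p → E → ℝ) (gf : Fin p → E → E)
    (hf : ∀ ι x, HasGradientAt (f ι) (gf ι x) x)
    (γ₀ : ℝ) (γ : Fin p → ℝ) (hγ₀ : 0 ≤ γ₀) (hγ : ∀ ι, 0 ≤ γ ι)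
    (hγsum : γ₀ + ∑ ι, γ ι = 1)
    (W : Fin n → Fin n → ℝ) (hW : ∀ i j, 0 ≤ W i j)
    (hWrow : ∀ i, ∑ j, W i j = 1) (hWcol : ∀ j, ∑ i, W i j = 1)
    (α : ℝ) (hα : 0 ≤ α) (v : Fin n → E) (ε : Fin n → Fin p → E)
    (xstar : E) (hxstar : ∀ ι, gf ι xstar = 0)
    (x : Fin n → E)
    (hx : ∀ j, x j = γ₀ • v j + ∑ ι, γ ι • (v j - α • (gf ι (v j) - ε j ι)))
    (v' : Fin n → E) (hv' : ∀ l, v' l = ∑ j, W l j • x j) :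
    ∑ l, ‖v' l - xstar‖ ^ 2 ≤
      ∑ j, ‖v j - xstar‖ ^ 2
      + 2 * α * (∑ j, ∑ ι, γ ι * ⟪ε j ι, v j - xstar⟫)
      + 2 * (1 - γ₀) * α ^ 2 * (∑ j, ∑ ι, γ ι * ‖ε j ι‖ ^ 2)
      - 2 * α * (∑ j, ∑ ι, γ ι *
          (⟪gf ι (v j), v j - xstar⟫ - (1 - γ₀) * α * ‖gf ι (v j)‖ ^ 2)) :=
  srdo_type1_error_bound_general hγ hγsum (mem_doublyStochastic_iff_sum.2 ⟨hW, hWrow, hWcol⟩)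
    α v (fun j ι ↦ gf ι (v j)) ε xstar hx hv'
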